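/- Let M and N be positive integers, T̄ = M + N, and let O = [[A, B],[C, D]] be a uniformly random (Haar-distributed) T̄×T̄ orthogonal matrix of determinant 1, in block form with A of size M×M and D of size N×N. Then the law of the M×N random matrix Ŵ := B(1_N + D)^{−1} is absolutely continuous with respect to Lebesgue measure on M×N real matrices, with density proportional to det(1_N + Ŵ*Ŵ)^{1/2 − M − N/2}. -/

import Mathlib

open MeasureTheory ProbabilityTheory Matrix

noncomputable section

instance matMS (m n : Type*) : MeasurableSpace (Matrix m n ℝ) :=
  (inferInstance : MeasurableSpace (m → n → ℝ))

instance matMeas (m n : Type*) [Fintype m] [Fintype n] : MeasureSpace (Matrix m n ℝ) :=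
  (inferInstance : MeasureSpace (m → n → ℝ))

/-- `ν` is the Haar (uniform) probability measure on the special orthogonal group. -/
def IsHaarSO (n : Type*) [Fintype n] [DecidableEq n] (ν : Measure (Matrix n n ℝ)) : Prop :=
  IsProbabilityMeasure ν ∧ (∀ᵐ O ∂ν, Oᵀ * O = 1 ∧ O.det = 1) ∧
    ∀ U : Matrix n n ℝ, Uᵀ * U = 1 → U.det = 1 → ν.map (fun O => U * O) = ν

/-!
In the Cayley chart `X ↦ 2(1 + X)⁻¹ - 1`, skew-symmetric `n × n` matrices `X` parametrise the
rotations without eigenvalue `-1`. The density `|det(1 + X)| ^ -(n - 1)` turns Lebesgue measure into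
a measure invariant under right translations, because the derivative of a translation in the chart
is a congruence of skew matrices; this is checked for products of two reflections, which generate
the special orthogonal group. By Fubini, a left-invariant probability measure is proportional to a
right-invariant one, so the chart computes Haar measure.

Write `X = [[x, y], [-yᵀ, z]]` and substitute `y = -(1 + x)W`. Then `B(1 + D)⁻¹ = W` and
`det(1 + X) = det(1 + x) det(1 + WᵀW + (z - Wᵀ x W))`. Integrating out `z`, after translating it by
`WᵀxW` and applying the congruence by a square root of `1 + WᵀW`, leaves a power of
`det(1 + WᵀW)` times a function of `x` alone.
-/

section Measurability

variable {m n : Type*}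

instance [Countable m] [Countable n] : BorelSpace (Matrix m n ℝ) :=
  inferInstanceAs (BorelSpace (m → n → ℝ))

instance [Countable m] [Countable n] : SecondCountableTopology (Matrix m n ℝ) :=
  inferInstanceAs (SecondCountableTopology (m → n → ℝ))

variable [Fintype m]

instance [Fintype n] : (volume : Measure (Matrix m n ℝ)).IsAddHaarMeasure :=
  Measure.pi.isAddHaarMeasure fun _ : m => (volume : Measure (n → ℝ))

instance [Fintype n] : SigmaFinite (volume : Measure (Matrix m n ℝ)) :=
  inferInstanceAs (SigmaFinite (volume : Measure (m → n → ℝ)))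

lemma measurable_matrix_mul {α l : Type*} [MeasurableSpace α] [Countable l] [Countable n]
    {f : α → Matrix l m ℝ} {g : α → Matrix m n ℝ} (hf : Measurable f) (hg : Measurable g) :
    Measurable fun a => f a * g a :=
  (show Continuous fun p : Matrix l m ℝ × Matrix m n ℝ => p.1 * p.2 from
    continuous_fst.matrix_mul continuous_snd).measurable.comp (hf.prodMk hg)

variable [DecidableEq m]

lemma measurable_matrix_det : Measurable (det : Matrix m m ℝ → ℝ) :=
  continuous_id.matrix_det.measurable

lemma measurable_matrix_inv : Measurable fun A : Matrix m m ℝ => A⁻¹ := by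
  simp only [inv_def, Ring.inverse_eq_inv']
  exact measurable_matrix_det.inv.smul continuous_id.matrix_adjugate.measurable

end Measurability

section MonoidHom

variable {n K M : Type*} [Fintype n] [DecidableEq n] [Field K] [NeZero (2 : K)] [CommMonoid M]

-- Conjugating a transvection by `diag(1, …, 2, …, 1)` squares it, which forces its image to be `1`.
lemma map_transvection_eq_one (f : Matrix n n K →* M) {i j : n} (hij : i ≠ j) (c : K) :
    f (transvection i j c) = 1 := by
  set D : Matrix n n K := diagonal (Function.update 1 i 2) with hD
  have D_isUnit : IsUnit D := by
    rw [isUnit_iff_isUnit_det, hD, det_diagonal, Finset.prod_update_of_mem (Finset.mem_univ i)]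
    simp [NeZero.ne (2 : K)]
  have transvection_isUnit : IsUnit (transvection i j c) := by
    simp [isUnit_iff_isUnit_det, det_transvection_of_ne _ _ hij]
  have conj : D * transvection i j c = transvection i j c * transvection i j c * D := by
    rw [transvection_mul_transvection_same _ _ hij]
    ext a b
    simp only [hD, transvection, diagonal_mul, mul_diagonal, Matrix.add_apply, Matrix.one_apply,
      Matrix.single_apply, Function.update_apply, Pi.one_apply]
    split_ifs <;> grind
  have key := congrArg f conj
  rw [map_mul, map_mul, map_mul, mul_comm, mul_assoc] at key
  have cancelled := (transvection_isUnit.map f).mul_left_cancel key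
  exact (D_isUnit.map f).mul_right_cancel (by rw [one_mul, ← cancelled])

theorem monoidHom_ext_of_diagonal {f g : Matrix n n K →* M}
    (h : ∀ d, f (diagonal d) = g (diagonal d)) : f = g := by
  ext A
  induction A using diagonal_transvection_induction with
  | hdiag d => exact h d
  | htransvec t =>
    rw [TransvectionStruct.toMatrix, map_transvection_eq_one f t.hij,
      map_transvection_eq_one g t.hij]
  | hmul A B hA hB => rw [map_mul, map_mul, hA, hB]

end MonoidHom

section SkewMatrix

variable {n : Type*} [Fintype n]

/-- The positions strictly above the diagonal of an `n × n` matrix, for an arbitrary enumeration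
of `n`. -/
abbrev UpperPair (n : Type*) [Fintype n] : Type _ :=
  {p : n × n // Fintype.equivFin n p.1 < Fintype.equivFin n p.2}

/-- The space of skew-symmetric `n × n` matrices, encoded by the entries above the diagonal so
that it carries a Lebesgue measure. -/
abbrev SkewCoord (n : Type*) [Fintype n] : Type _ := UpperPair n → ℝ

/-- The entries of a matrix above the diagonal. -/
def upperEntries : Matrix n n ℝ →ₗ[ℝ] SkewCoord n where
  toFun A p := A p.1.1 p.1.2
  map_add' _ _ := rfl
  map_smul' _ _ := rfl

/-- The skew-symmetric matrix with prescribed entries above the diagonal. -/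
def skewMatrix : SkewCoord n →ₗ[ℝ] Matrix n n ℝ where
  toFun v := .of fun i j =>
    if h : Fintype.equivFin n i < Fintype.equivFin n j then v ⟨(i, j), h⟩
    else if h : Fintype.equivFin n j < Fintype.equivFin n i then -v ⟨(j, i), h⟩ else 0
  map_add' v w := by
    ext i j
    simp only [of_apply, Matrix.add_apply, Pi.add_apply]
    split_ifs <;> ring
  map_smul' c v := by
    ext i j
    simp only [of_apply, Matrix.smul_apply, Pi.smul_apply, smul_eq_mul, RingHom.id_apply]
    split_ifs <;> ring

@[simp] lemma upperEntries_apply (A : Matrix n n ℝ) (p : UpperPair n) :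
    upperEntries A p = A p.1.1 p.1.2 := rfl

@[simp] lemma upperEntries_skewMatrix (v : SkewCoord n) : upperEntries (skewMatrix v) = v := by
  ext p
  simp [skewMatrix, p.2]

lemma transpose_skewMatrix (v : SkewCoord n) : (skewMatrix v)ᵀ = -skewMatrix v := by
  ext i j
  rcases lt_trichotomy (Fintype.equivFin n i) (Fintype.equivFin n j) with h | h | h <;>
    simp [skewMatrix, h, h.not_gt]

lemma skewMatrix_upperEntries {A : Matrix n n ℝ} (hA : Aᵀ = -A) :
    skewMatrix (upperEntries A) = A := by
  have entry (i j : n) : A j i = -A i j := congrFun₂ hA i j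
  ext i j
  rcases lt_trichotomy (Fintype.equivFin n i) (Fintype.equivFin n j) with h | h | h
  · simp [skewMatrix, h]
  · obtain rfl := (Fintype.equivFin n).injective h
    simp [skewMatrix, self_eq_neg.mp (entry i i)]
  · simp [skewMatrix, h, h.not_gt, entry i j]

lemma continuous_skewMatrix : Continuous (skewMatrix : SkewCoord n → Matrix n n ℝ) :=
  LinearMap.continuous_of_finiteDimensional _

/-- The congruence `A ↦ Qᵀ A Q` on skew-symmetric matrices. -/
def skewCongr (Q : Matrix n n ℝ) : SkewCoord n →ₗ[ℝ] SkewCoord n where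
  toFun v := upperEntries (Qᵀ * skewMatrix v * Q)
  map_add' v w := by simp only [map_add, Matrix.mul_add, Matrix.add_mul]
  map_smul' c v := by simp only [map_smul, Matrix.mul_smul, Matrix.smul_mul, RingHom.id_apply]

lemma skewCongr_apply (Q : Matrix n n ℝ) (v : SkewCoord n) :
    skewCongr Q v = upperEntries (Qᵀ * skewMatrix v * Q) := rfl

lemma skewMatrix_skewCongr (Q : Matrix n n ℝ) (v : SkewCoord n) :
    skewMatrix (skewCongr Q v) = Qᵀ * skewMatrix v * Q := by
  rw [skewCongr_apply, skewMatrix_upperEntries]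
  simp [transpose_mul, transpose_skewMatrix, Matrix.mul_assoc]

lemma skewCongr_mul (Q R : Matrix n n ℝ) : skewCongr (Q * R) = skewCongr R ∘ₗ skewCongr Q := by
  refine LinearMap.ext fun v => ?_
  simp only [LinearMap.comp_apply, skewCongr_apply R, skewMatrix_skewCongr, skewCongr_apply (Q * R),
    transpose_mul, Matrix.mul_assoc]

lemma prod_upperPair {R : Type*} [CommMonoid R] (d : n → R) :
    ∏ p : UpperPair n, d p.1.1 * d p.1.2 = (∏ i, d i) ^ (Fintype.card n - 1) := by
  classical
  let e := Fintype.equivFin n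
  have swap : ∏ p : n × n with e p.1 < e p.2, d p.2 = ∏ p : n × n with e p.2 < e p.1, d p.1 :=
    Finset.prod_nbij' Prod.swap Prod.swap (by simp) (by simp) (by simp) (by simp) (by simp)
  have disjoint : Disjoint (Finset.univ.filter fun p : n × n => e p.1 < e p.2)
      (Finset.univ.filter fun p : n × n => e p.2 < e p.1) :=
    Finset.disjoint_filter.mpr fun _ _ h => h.not_gt
  calc ∏ p : UpperPair n, d p.1.1 * d p.1.2
    _ = ∏ p : n × n with e p.1 < e p.2, d p.1 * d p.2 :=
        (Finset.prod_subtype _ (by simp [e]) fun p : n × n => d p.1 * d p.2).symm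
    _ = ∏ p : n × n with p.1 ≠ p.2, d p.1 := by
        rw [Finset.prod_mul_distrib, swap, ← Finset.prod_union disjoint, ← Finset.filter_or]
        simp only [lt_or_lt_iff_ne, e.injective.ne_iff]
    _ = ∏ i, d i ^ (Fintype.card n - 1) := by
        rw [Finset.prod_filter, Fintype.prod_prod_type]
        refine Finset.prod_congr rfl fun i _ => ?_
        dsimp only
        rw [← Finset.prod_filter, Finset.prod_const, Finset.filter_ne,
          Finset.card_erase_of_mem (Finset.mem_univ _), Finset.card_univ]
    _ = _ := Finset.prod_pow _ _ _

variable [DecidableEq n]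

lemma skewCongr_one : skewCongr (1 : Matrix n n ℝ) = LinearMap.id :=
  LinearMap.ext fun v => by
    simp [skewCongr_apply]

lemma det_skewCongr_diagonal (d : n → ℝ) :
    (skewCongr (diagonal d)).det = (diagonal d).det ^ (Fintype.card n - 1) := by
  have : skewCongr (diagonal d) = toLin' (diagonal fun p : UpperPair n => d p.1.1 * d p.1.2) := by
    refine LinearMap.ext fun v => funext fun p => ?_
    have entry := congrFun (upperEntries_skewMatrix v) p
    rw [upperEntries_apply] at entry
    simp only [skewCongr_apply, upperEntries_apply, diagonal_transpose, mul_diagonal, diagonal_mul,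
      toLin'_apply, mulVec_diagonal, entry]
    ring
  rw [this, LinearMap.det_toLin', det_diagonal, det_diagonal, prod_upperPair]

theorem det_skewCongr (Q : Matrix n n ℝ) :
    (skewCongr Q).det = Q.det ^ (Fintype.card n - 1) := by
  let f : Matrix n n ℝ →* ℝ :=
    { toFun := fun Q => (skewCongr Q).det
      map_one' := by rw [skewCongr_one, LinearMap.det_id]
      map_mul' := fun Q R => by rw [skewCongr_mul, LinearMap.det_comp, mul_comm] }
  let g : Matrix n n ℝ →* ℝ := (powMonoidHom (Fintype.card n - 1)).comp detMonoidHom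
  exact DFunLike.congr_fun (monoidHom_ext_of_diagonal (f := f) (g := g) det_skewCongr_diagonal) Q

end SkewMatrix

section Cayley

variable {n R : Type*} [Fintype n] [DecidableEq n]

section CommRing

variable [CommRing R] {A : Matrix n n R}

/-- The Cayley transform `(1 - A)(1 + A)⁻¹` of a matrix, written as `2(1 + A)⁻¹ - 1`. -/
def cayley (A : Matrix n n R) : Matrix n n R := (2 : R) • (1 + A)⁻¹ - 1

lemma one_add_cayley (A : Matrix n n R) : 1 + cayley A = (2 : R) • (1 + A)⁻¹ :=
  add_sub_cancel _ _

lemma transpose_cayley (A : Matrix n n R) : (cayley A)ᵀ = cayley Aᵀ := by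
  simp [cayley, transpose_nonsing_inv]

lemma cayley_mul_one_add (hA : IsUnit (1 + A).det) : cayley A * (1 + A) = 1 - A := by
  rw [cayley, sub_mul, smul_mul, nonsing_inv_mul _ hA, two_smul, one_mul]
  abel

lemma one_add_mul_cayley (hA : IsUnit (1 + A).det) : (1 + A) * cayley A = 1 - A := by
  rw [cayley, mul_sub, Matrix.mul_smul, mul_nonsing_inv _ hA, two_smul, mul_one]
  abel

lemma one_sub_cayley (hA : IsUnit (1 + A).det) : 1 - cayley A = (1 + cayley A) * A := by
  have := cayley_mul_one_add hA
  linear_combination (norm := noncomm_ring) -this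

lemma cayley_neg_mul_cayley (hA : IsUnit (1 + A).det) (hA' : IsUnit (1 + -A).det) :
    cayley (-A) * cayley A = 1 := by
  have partial_fractions : (1 + -A)⁻¹ + (1 + A)⁻¹ = (2 : R) • ((1 + -A)⁻¹ * (1 + A)⁻¹) :=
    calc (1 + -A)⁻¹ + (1 + A)⁻¹
      _ = (1 + -A)⁻¹ * ((1 + A) + (1 + -A)) * (1 + A)⁻¹ := by
          rw [mul_add, add_mul, mul_nonsing_inv_cancel_right _ _ hA, nonsing_inv_mul _ hA', one_mul]
      _ = _ := by
          rw [add_add_add_comm, add_neg_cancel, add_zero, one_add_one_eq_two, mul_two, add_mul,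
            two_smul]
  rw [two_smul] at partial_fractions
  simp only [cayley, two_smul]
  linear_combination (norm := noncomm_ring) -2 * partial_fractions

lemma transpose_cayley_of_orthogonal (hA : A ∈ orthogonalGroup n R) (h : IsUnit (1 + A).det) :
    (cayley A)ᵀ = -cayley A := by
  rw [mem_orthogonalGroup_iff'] at hA
  have inv_transpose : (1 + Aᵀ)⁻¹ = (1 + A)⁻¹ * A := by
    rw [show 1 + Aᵀ = Aᵀ * (1 + A) by rw [mul_add, hA, mul_one, add_comm], Matrix.mul_inv_rev,
      inv_eq_right_inv hA]
  have resolvent : (1 + A)⁻¹ + (1 + A)⁻¹ * A = 1 := by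
    rw [← mul_one_add, nonsing_inv_mul _ h]
  rw [transpose_cayley, cayley, cayley, inv_transpose, two_smul, two_smul]
  linear_combination (norm := noncomm_ring) 2 * resolvent

end CommRing

section Field

variable [Field R]

lemma det_one_add_cayley (A : Matrix n n R) :
    (1 + cayley A).det = 2 ^ Fintype.card n * (1 + A).det⁻¹ := by
  rw [one_add_cayley, det_smul, det_nonsing_inv, Ring.inverse_eq_inv']

variable [NeZero (2 : R)] {A : Matrix n n R}

lemma det_one_add_cayley_ne_zero (hA : (1 + A).det ≠ 0) : (1 + cayley A).det ≠ 0 := by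
  rw [det_one_add_cayley]
  exact mul_ne_zero (pow_ne_zero _ two_ne_zero) (inv_ne_zero hA)

lemma cayley_cayley (hA : (1 + A).det ≠ 0) : cayley (cayley A) = A := by
  have inv_one_add : (1 + cayley A)⁻¹ = (2 : R)⁻¹ • (1 + A) := by
    refine inv_eq_right_inv ?_
    rw [one_add_cayley, smul_mul_smul_comm, nonsing_inv_mul _ hA.isUnit,
      mul_inv_cancel₀ two_ne_zero,
      one_smul]
  rw [cayley, inv_one_add, smul_inv_smul₀ two_ne_zero, add_sub_cancel_left]

end Field

section LinearOrderedField

variable [Field R] [LinearOrder R] [IsStrictOrderedRing R] {A : Matrix n n R}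

lemma det_one_add_ne_zero_of_skew (hA : Aᵀ = -A) : (1 + A).det ≠ 0 := by
  intro singular
  obtain ⟨u, u_ne_zero, hu⟩ := exists_mulVec_eq_zero_iff.mpr singular
  have skew : u ⬝ᵥ A *ᵥ u = 0 := by
    have : u ⬝ᵥ A *ᵥ u = -(u ⬝ᵥ A *ᵥ u) := by
      conv_lhs => rw [dotProduct_mulVec, ← mulVec_transpose, hA, neg_mulVec, neg_dotProduct,
        dotProduct_comm]
    exact self_eq_neg.mp this
  refine u_ne_zero (dotProduct_self_eq_zero.mp ?_)
  simpa [add_mulVec, skew] using congrArg (u ⬝ᵥ ·) hu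

lemma cayley_mem_specialOrthogonalGroup (hA : Aᵀ = -A) :
    cayley A ∈ specialOrthogonalGroup n R := by
  have hdet := det_one_add_ne_zero_of_skew hA
  have hdet' : (1 + -A).det ≠ 0 := det_one_add_ne_zero_of_skew (by rw [transpose_neg, hA])
  refine mem_specialOrthogonalGroup_iff.mpr ⟨(mem_orthogonalGroup_iff' n R).mpr ?_, ?_⟩
  · rw [transpose_cayley, hA, cayley_neg_mul_cayley hdet.isUnit hdet'.isUnit]
  · refine mul_right_cancel₀ hdet ?_
    rw [← det_mul, cayley_mul_one_add hdet.isUnit, one_mul, ← det_transpose (1 + A), transpose_add,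
      hA, transpose_one, sub_eq_add_neg]

end LinearOrderedField

end Cayley

section CayleyChart

variable {n : Type*} [Fintype n] [DecidableEq n]

/-- The Cayley parametrisation of the special orthogonal group by skew-symmetric matrices. -/
def skewCayley (v : SkewCoord n) : Matrix n n ℝ := cayley (skewMatrix v)

/-- The inverse of `skewCayley`, defined where `1 + O` is invertible. -/
def cayleyCoord (O : Matrix n n ℝ) : SkewCoord n := upperEntries (cayley O)

lemma det_one_add_skewMatrix_ne_zero (v : SkewCoord n) : (1 + skewMatrix v).det ≠ 0 :=
  det_one_add_ne_zero_of_skew (transpose_skewMatrix v)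

lemma skewCayley_mem_specialOrthogonalGroup (v : SkewCoord n) :
    skewCayley v ∈ specialOrthogonalGroup n ℝ :=
  cayley_mem_specialOrthogonalGroup (transpose_skewMatrix v)

lemma det_one_add_skewCayley_ne_zero (v : SkewCoord n) : (1 + skewCayley v).det ≠ 0 :=
  det_one_add_cayley_ne_zero (det_one_add_skewMatrix_ne_zero v)

lemma cayleyCoord_skewCayley (v : SkewCoord n) : cayleyCoord (skewCayley v) = v := by
  rw [cayleyCoord, skewCayley, cayley_cayley (det_one_add_skewMatrix_ne_zero v),
    upperEntries_skewMatrix]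

lemma skewMatrix_cayleyCoord {O : Matrix n n ℝ} (hO : O ∈ orthogonalGroup n ℝ)
    (h : (1 + O).det ≠ 0) : skewMatrix (cayleyCoord O) = cayley O :=
  skewMatrix_upperEntries (transpose_cayley_of_orthogonal hO h.isUnit)

lemma skewCayley_cayleyCoord {O : Matrix n n ℝ} (hO : O ∈ orthogonalGroup n ℝ)
    (h : (1 + O).det ≠ 0) : skewCayley (cayleyCoord O) = O := by
  rw [skewCayley, skewMatrix_cayleyCoord hO h, cayley_cayley h]

lemma measurable_cayley : Measurable (cayley : Matrix n n ℝ → Matrix n n ℝ) :=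
  ((measurable_matrix_inv.comp (measurable_id.const_add 1)).const_smul (2 : ℝ)).sub_const 1

lemma measurable_skewCayley : Measurable (skewCayley : SkewCoord n → Matrix n n ℝ) :=
  measurable_cayley.comp continuous_skewMatrix.measurable

end CayleyChart

section NullSets

lemma addHaar_eq_zero_of_ae_smul_notMem {E : Type*} [NormedAddCommGroup E] [NormedSpace ℝ E]
    [FiniteDimensional ℝ E] [MeasurableSpace E] [BorelSpace E] (μ : Measure E)
    [μ.IsAddHaarMeasure] {s : Set E} (hs : MeasurableSet s)
    (h : ∀ v, ∀ᵐ t : ℝ, t • v ∉ s) : μ s = 0 := by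
  have smul_measurable : MeasurableSet {p : E × ℝ | p.2 • p.1 ∉ s} :=
    (measurable_snd.smul measurable_fst) hs.compl
  have rays : ∀ᵐ t : ℝ, ∀ᵐ v ∂μ, t • v ∉ s :=
    (Measure.ae_ae_comm smul_measurable).mp (ae_of_all μ h)
  obtain ⟨t, scaled_null, t_ne_zero⟩ := (rays.and (volume.ae_ne (0 : ℝ))).exists
  have preimage_null : μ ((t • ·) ⁻¹' s) = 0 := by
    simpa [ae_iff, Set.preimage] using scaled_null
  rw [Measure.addHaar_preimage_smul μ t_ne_zero] at preimage_null
  simpa [t_ne_zero] using preimage_null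

lemma finite_setOf_det_add_smul_eq_zero {R n : Type*} [CommRing R] [IsDomain R] [Fintype n]
    [DecidableEq n] {A : Matrix n n R} (hA : A.det ≠ 0) (B : Matrix n n R) :
    {t : R | (A + t • B).det = 0}.Finite := by
  set p : Polynomial R :=
    ((Polynomial.X : Polynomial R) • B.map Polynomial.C + A.map Polynomial.C).det with hp_def
  have p_ne_zero : p ≠ 0 := fun hp =>
    hA (by rw [← Polynomial.coeff_det_X_add_C_zero B A, ← hp_def, hp, Polynomial.coeff_zero])
  have eval_p (t : R) : p.eval t = (A + t • B).det := by
    rw [hp_def, ← Polynomial.coe_evalRingHom, RingHom.map_det]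
    congr 1
    ext i j
    simp [add_comm (A i j), mul_comm t]
  simpa only [Polynomial.IsRoot.def, eval_p] using Polynomial.finite_setOfPred_isRoot p_ne_zero

end NullSets

section CayleyTranslation

variable {n : Type*} [Fintype n] [DecidableEq n]

/-- Right translation by `U` on the special orthogonal group, read in the Cayley chart. -/
def cayleyTranslation (U : Matrix n n ℝ) (v : SkewCoord n) : SkewCoord n :=
  cayleyCoord (skewCayley v * U)

/-- The skew-symmetric matrices whose Cayley transform remains in the Cayley chart after right
translation by `U`. -/
def cayleyTranslationDomain (U : Matrix n n ℝ) : Set (SkewCoord n) :=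
  {v | (1 + skewCayley v * U).det ≠ 0}

lemma measurableSet_cayleyTranslationDomain (U : Matrix n n ℝ) :
    MeasurableSet (cayleyTranslationDomain U) :=
  (measurable_matrix_det.comp ((measurable_skewCayley.mul_const U).const_add 1))
    (measurableSet_singleton 0).compl

lemma ae_mem_cayleyTranslationDomain {U : Matrix n n ℝ} (hU : (1 + U).det ≠ 0) :
    ∀ᵐ v, v ∈ cayleyTranslationDomain U := by
  refine addHaar_eq_zero_of_ae_smul_notMem _ (measurableSet_cayleyTranslationDomain U).compl ?_
  intro v
  have affine (t : ℝ) : t • v ∉ (cayleyTranslationDomain U)ᶜ ↔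
      ((1 + U) + t • (skewMatrix v * (1 - U))).det ≠ 0 := by
    have factor : (1 + U) + t • (skewMatrix v * (1 - U)) =
        (1 + skewMatrix (t • v)) * (1 + skewCayley (t • v) * U) := by
      have := one_add_mul_cayley (det_one_add_skewMatrix_ne_zero (t • v)).isUnit
      rw [mul_one_add, ← Matrix.mul_assoc, skewCayley, this, map_smul, ← smul_mul]
      noncomm_ring
    rw [factor, det_mul, mul_ne_zero_iff, Set.notMem_compl_iff]
    exact (and_iff_right (det_one_add_skewMatrix_ne_zero _)).symm
  filter_upwards [(finite_setOf_det_add_smul_eq_zero hU _).countable.ae_notMem volume] with t ht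
  exact (affine t).mpr ht

variable {U : Matrix n n ℝ} {v : SkewCoord n}

lemma skewCayley_mul_mem_orthogonalGroup (hU : U ∈ orthogonalGroup n ℝ) (v : SkewCoord n) :
    skewCayley v * U ∈ orthogonalGroup n ℝ :=
  mul_mem (skewCayley_mem_specialOrthogonalGroup v).1 hU

lemma skewCayley_cayleyTranslation (hU : U ∈ orthogonalGroup n ℝ)
    (hv : v ∈ cayleyTranslationDomain U) :
    skewCayley (cayleyTranslation U v) = skewCayley v * U :=
  skewCayley_cayleyCoord (skewCayley_mul_mem_orthogonalGroup hU v) hv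

lemma skewMatrix_cayleyTranslation (hU : U ∈ orthogonalGroup n ℝ)
    (hv : v ∈ cayleyTranslationDomain U) :
    skewMatrix (cayleyTranslation U v) = cayley (skewCayley v * U) :=
  skewMatrix_cayleyCoord (skewCayley_mul_mem_orthogonalGroup hU v) hv

lemma cayleyTranslation_mem_domain {V : Matrix n n ℝ} (hU : U ∈ orthogonalGroup n ℝ)
    (hUV : U * V = 1) (hv : v ∈ cayleyTranslationDomain U) :
    cayleyTranslation U v ∈ cayleyTranslationDomain V := by
  change (1 + skewCayley (cayleyTranslation U v) * V).det ≠ 0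
  rw [skewCayley_cayleyTranslation hU hv, Matrix.mul_assoc, hUV, mul_one]
  exact det_one_add_skewCayley_ne_zero v

lemma cayleyTranslation_cayleyTranslation {V : Matrix n n ℝ} (hU : U ∈ orthogonalGroup n ℝ)
    (hUV : U * V = 1) (hv : v ∈ cayleyTranslationDomain U) :
    cayleyTranslation V (cayleyTranslation U v) = v := by
  rw [cayleyTranslation, skewCayley_cayleyTranslation hU hv, Matrix.mul_assoc, hUV, mul_one,
    cayleyCoord_skewCayley]

lemma bijOn_cayleyTranslation (hU : U ∈ orthogonalGroup n ℝ) :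
    Set.BijOn (cayleyTranslation U) (cayleyTranslationDomain U) (cayleyTranslationDomain Uᵀ) := by
  have mul_transpose := (mem_orthogonalGroup_iff n ℝ).mp hU
  have transpose_mul := (mem_orthogonalGroup_iff' n ℝ).mp hU
  have hUt : Uᵀ ∈ orthogonalGroup n ℝ :=
    (mem_orthogonalGroup_iff n ℝ).mpr (by rw [transpose_transpose, transpose_mul])
  exact Set.BijOn.mk (fun v hv => cayleyTranslation_mem_domain hU mul_transpose hv)
    (Set.LeftInvOn.injOn fun v hv => cayleyTranslation_cayleyTranslation hU mul_transpose hv)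
    fun w hw => ⟨_, cayleyTranslation_mem_domain hUt transpose_mul hw,
      cayleyTranslation_cayleyTranslation hUt transpose_mul hw⟩

/-- The matrix `Q` for which the derivative of `cayleyTranslation U` at `v` is the congruence
`skewCongr Q`. -/
def translationCongr (U : Matrix n n ℝ) (v : SkewCoord n) : Matrix n n ℝ :=
  (2 : ℝ)⁻¹ • ((1 + skewCayley v) * U * (1 + cayley (skewCayley v * U)))

lemma transpose_translationCongr (hU : U ∈ orthogonalGroup n ℝ)
    (hv : v ∈ cayleyTranslationDomain U) :
    (translationCongr U v)ᵀ =
      (2 : ℝ)⁻¹ • ((1 + cayley (skewCayley v * U)) * (1 + skewCayley v)) := by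
  have hVU := skewCayley_mul_mem_orthogonalGroup hU v
  have V_mul_transpose := (mem_orthogonalGroup_iff n ℝ).mp
    (skewCayley_mem_specialOrthogonalGroup v).1
  have U_mul_transpose := (mem_orthogonalGroup_iff n ℝ).mp hU
  rw [translationCongr, transpose_smul, transpose_mul, transpose_mul, transpose_add,
    transpose_add, transpose_one, transpose_cayley_of_orthogonal hVU hv.isUnit, ← sub_eq_add_neg,
    one_sub_cayley hv.isUnit]
  congr 1
  calc _ = (1 + cayley (skewCayley v * U)) *
        (skewCayley v * (U * Uᵀ) + skewCayley v * (U * Uᵀ) * (skewCayley v)ᵀ) := by noncomm_ring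
    _ = _ := by rw [U_mul_transpose, mul_one, V_mul_transpose, add_comm (skewCayley v)]

section Derivative

attribute [local instance] Matrix.linftyOpNormedRing Matrix.linftyOpNormedAlgebra

lemma hasFDerivAt_matrix_inv {A : Matrix n n ℝ} (hA : A.det ≠ 0) :
    HasFDerivAt (fun B : Matrix n n ℝ => B⁻¹)
      (-ContinuousLinearMap.mulLeftRight ℝ (Matrix n n ℝ) A⁻¹ A⁻¹) A := by
  obtain ⟨u, rfl⟩ := (isUnit_iff_isUnit_det A).mpr hA.isUnit
  rw [← coe_units_inv, funext nonsing_inv_eq_ringInverse]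
  exact hasFDerivAt_ringInverse u

lemma hasFDerivAt_cayley {A : Matrix n n ℝ} (hA : (1 + A).det ≠ 0) :
    HasFDerivAt cayley (-(2 : ℝ)⁻¹ • ContinuousLinearMap.mulLeftRight ℝ (Matrix n n ℝ)
      (1 + cayley A) (1 + cayley A)) A := by
  have inv_deriv := (hasFDerivAt_matrix_inv hA).comp A ((hasFDerivAt_id A).const_add 1)
  refine ((inv_deriv.const_smul (2 : ℝ)).sub_const 1).congr_fderiv ?_
  refine ContinuousLinearMap.ext fun H => ?_
  change (2 : ℝ) • -((1 + A)⁻¹ * H * (1 + A)⁻¹) =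
    -(2 : ℝ)⁻¹ • ((1 + cayley A) * H * (1 + cayley A))
  simp only [one_add_cayley, smul_mul, Matrix.mul_smul, smul_smul, smul_neg, ← neg_smul]
  norm_num

lemma hasFDerivAt_cayleyTranslation (hU : U ∈ orthogonalGroup n ℝ)
    (hv : v ∈ cayleyTranslationDomain U) :
    HasFDerivAt (cayleyTranslation U)
      (skewCongr (translationCongr U v)).toContinuousLinearMap v := by
  have param := (hasFDerivAt_cayley (det_one_add_skewMatrix_ne_zero v)).comp v
    skewMatrix.toContinuousLinearMap.hasFDerivAt
  have chart := upperEntries.toContinuousLinearMap.hasFDerivAt.comp v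
    ((hasFDerivAt_cayley hv).comp v (param.mul_const' U))
  refine chart.congr_fderiv (ContinuousLinearMap.ext fun w => ?_)
  rw [LinearMap.coe_toContinuousLinearMap', skewCongr_apply, transpose_translationCongr hU hv,
    translationCongr]
  change upperEntries (-(2 : ℝ)⁻¹ • ((1 + cayley (skewCayley v * U)) *
    (-(2 : ℝ)⁻¹ • ((1 + skewCayley v) * skewMatrix w * (1 + skewCayley v)) * U) *
    (1 + cayley (skewCayley v * U)))) = _
  simp only [smul_mul, Matrix.mul_smul, smul_smul, neg_mul_neg, Matrix.mul_assoc]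

end Derivative

end CayleyTranslation

section CayleyMeasure

variable {n : Type*} [Fintype n] [DecidableEq n]

/-- The density of a Haar measure on the special orthogonal group in the Cayley chart. -/
def cayleyDensity (v : SkewCoord n) : ENNReal :=
  ENNReal.ofReal (|(1 + skewMatrix v).det| ^ (Fintype.card n - 1))⁻¹

/-- An unnormalised Haar measure on the special orthogonal group, constructed in the Cayley
chart. -/
def cayleyMeasure (n : Type*) [Fintype n] [DecidableEq n] : Measure (Matrix n n ℝ) :=
  (volume.withDensity cayleyDensity).map skewCayley

lemma measurable_cayleyDensity : Measurable (cayleyDensity : SkewCoord n → ENNReal) := by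
  have : Measurable fun v : SkewCoord n => (1 + skewMatrix v).det :=
    measurable_matrix_det.comp (continuous_skewMatrix.measurable.const_add 1)
  exact (this.abs.pow_const _).inv.ennreal_ofReal

lemma cayleyDensity_ne_zero (v : SkewCoord n) : cayleyDensity v ≠ 0 := by
  have := abs_pos.mpr (det_one_add_skewMatrix_ne_zero v)
  exact (ENNReal.ofReal_pos.mpr (by positivity)).ne'

lemma lintegral_cayleyMeasure {F : Matrix n n ℝ → ENNReal} (hF : Measurable F) :
    ∫⁻ O, F O ∂cayleyMeasure n = ∫⁻ v, cayleyDensity v * F (skewCayley v) := by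
  rw [cayleyMeasure, lintegral_map hF measurable_skewCayley]
  exact lintegral_withDensity_eq_lintegral_mul _ measurable_cayleyDensity
    (hF.comp measurable_skewCayley)

variable {U : Matrix n n ℝ}

lemma abs_det_of_mem_orthogonalGroup (hU : U ∈ orthogonalGroup n ℝ) : |U.det| = 1 := by
  have := congrArg det ((mem_orthogonalGroup_iff' n ℝ).mp hU)
  rw [det_mul, det_transpose, det_one, ← sq] at this
  exact (pow_eq_one_iff_of_nonneg (abs_nonneg _) two_ne_zero).mp ((sq_abs _).trans this)

lemma abs_det_skewCongr_mul_cayleyDensity (hU : U ∈ orthogonalGroup n ℝ) {v : SkewCoord n}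
    (hv : v ∈ cayleyTranslationDomain U) :
    ENNReal.ofReal |(skewCongr (translationCongr U v)).det| *
      cayleyDensity (cayleyTranslation U v) = cayleyDensity v := by
  have source_ne_zero := det_one_add_skewMatrix_ne_zero v
  have target_ne_zero := det_one_add_skewMatrix_ne_zero (cayleyTranslation U v)
  have det_congr : |(translationCongr U v).det| =
      |(1 + skewMatrix (cayleyTranslation U v)).det| * |(1 + skewMatrix v).det|⁻¹ := by
    rw [translationCongr, ← skewMatrix_cayleyTranslation hU hv, det_smul, det_mul, det_mul,
      skewCayley, det_one_add_cayley]
    simp only [abs_mul, abs_det_of_mem_orthogonalGroup hU, abs_inv, abs_pow, abs_two]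
    field_simp
    rw [← mul_pow]
    norm_num
  rw [cayleyDensity, cayleyDensity, ← ENNReal.ofReal_mul (abs_nonneg _), det_skewCongr, abs_pow,
    det_congr, mul_pow, inv_pow]
  congr 1
  have := abs_pos.mpr target_ne_zero
  field_simp

lemma lintegral_cayley_translation (hU : U ∈ orthogonalGroup n ℝ) (h : (1 + U).det ≠ 0)
    (F : Matrix n n ℝ → ENNReal) :
    ∫⁻ v, cayleyDensity v * F (skewCayley v * U) = ∫⁻ v, cayleyDensity v * F (skewCayley v) := by
  have h_transpose : (1 + Uᵀ).det ≠ 0 := by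
    rwa [← det_transpose, transpose_add, transpose_one, transpose_transpose]
  have bij := bijOn_cayleyTranslation hU
  calc ∫⁻ v, cayleyDensity v * F (skewCayley v * U)
    _ = ∫⁻ v in cayleyTranslationDomain U, cayleyDensity v * F (skewCayley v * U) := by
        rw [Measure.restrict_eq_self_of_ae_mem (ae_mem_cayleyTranslationDomain h)]
    _ = ∫⁻ v in cayleyTranslationDomain U,
          ENNReal.ofReal |(skewCongr (translationCongr U v)).toContinuousLinearMap.det| *
            (cayleyDensity (cayleyTranslation U v) * F (skewCayley (cayleyTranslation U v))) := by
        refine setLIntegral_congr_fun (measurableSet_cayleyTranslationDomain U) fun v hv => ?_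
        rw [← mul_assoc, LinearMap.det_toContinuousLinearMap,
          abs_det_skewCongr_mul_cayleyDensity hU hv, skewCayley_cayleyTranslation hU hv]
    _ = ∫⁻ v in cayleyTranslationDomain Uᵀ, cayleyDensity v * F (skewCayley v) := by
        rw [← bij.image_eq]
        exact (lintegral_image_eq_lintegral_abs_det_fderiv_mul volume
          (measurableSet_cayleyTranslationDomain U)
          (fun v hv => (hasFDerivAt_cayleyTranslation hU hv).hasFDerivWithinAt) bij.injOn
          fun v => cayleyDensity v * F (skewCayley v)).symm
    _ = ∫⁻ v, cayleyDensity v * F (skewCayley v) := by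
        rw [Measure.restrict_eq_self_of_ae_mem (ae_mem_cayleyTranslationDomain h_transpose)]

theorem map_mul_right_cayleyMeasure (hU : U ∈ orthogonalGroup n ℝ) (h : (1 + U).det ≠ 0) :
    (cayleyMeasure n).map (· * U) = cayleyMeasure n := by
  refine Measure.ext_of_lintegral _ fun F hF => ?_
  rw [lintegral_map hF (measurable_mul_const U), lintegral_cayleyMeasure hF,
    ← lintegral_cayley_translation hU h]
  exact lintegral_cayleyMeasure (hF.comp (measurable_mul_const U))

lemma measurableEmbedding_skewCayley :
    MeasurableEmbedding (skewCayley : SkewCoord n → Matrix n n ℝ) :=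
  measurable_skewCayley.measurableEmbedding
    (Function.LeftInverse.injective cayleyCoord_skewCayley)

instance : SigmaFinite (cayleyMeasure n) :=
  have := SigmaFinite.withDensity_of_ne_top' (μ := volume)
    (f := cayleyDensity (n := n)) fun _ => ENNReal.ofReal_ne_top
  measurableEmbedding_skewCayley.sigmaFinite_map

lemma ae_mem_cayleyMeasure : ∀ᵐ O ∂cayleyMeasure n, O ∈ specialOrthogonalGroup n ℝ :=
  measurableEmbedding_skewCayley.ae_map_iff.mpr
    (ae_of_all _ skewCayley_mem_specialOrthogonalGroup)

lemma cayleyMeasure_ne_zero : cayleyMeasure n ≠ 0 := by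
  rw [cayleyMeasure, Measure.map_ne_zero_iff measurable_skewCayley.aemeasurable, Ne,
    withDensity_eq_zero_iff measurable_cayleyDensity.aemeasurable]
  intro h
  obtain ⟨v, hv⟩ := h.exists
  exact cayleyDensity_ne_zero v hv

end CayleyMeasure

section Householder

variable {K n : Type*} [Field K] [Fintype n] [DecidableEq n]

/-- The matrix of the reflection in the hyperplane orthogonal to `u`; it is `1` for `u = 0`. -/
def householder (u : n → K) : Matrix n n K :=
  1 - (2 / (u ⬝ᵥ u)) • vecMulVec u u

lemma householder_mulVec (u x : n → K) :
    householder u *ᵥ x = x - (2 / (u ⬝ᵥ u) * (u ⬝ᵥ x)) • u := by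
  rw [householder, sub_mulVec, one_mulVec, smul_mulVec, vecMulVec_mulVec, op_smul_eq_smul,
    smul_smul]

lemma householder_zero : householder (0 : n → K) = 1 := by
  simp [householder]

lemma transpose_householder (u : n → K) : (householder u)ᵀ = householder u := by
  simp [householder, transpose_vecMulVec]

variable {u v : n → K}

lemma householder_mul_self (hu : u ⬝ᵥ u ≠ 0) : householder u * householder u = 1 := by
  refine ext_of_mulVec_single fun i => ?_
  rw [← mulVec_mulVec, one_mulVec, householder_mulVec, householder_mulVec, dotProduct_sub,
    dotProduct_smul, smul_eq_mul, sub_sub, ← add_smul, sub_eq_self]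
  convert zero_smul K u using 2
  field_simp
  ring

lemma det_householder (hu : u ⬝ᵥ u ≠ 0) : (householder u).det = -1 := by
  have rank_one : householder u = 1 + vecMulVec (-(2 / (u ⬝ᵥ u)) • u) u := by
    rw [householder, smul_vecMulVec, neg_smul, sub_eq_add_neg]
  rw [rank_one, vecMulVec_eq Unit, det_one_add_replicateCol_mul_replicateRow, dotProduct_smul,
    smul_eq_mul, neg_mul, div_mul_cancel₀ _ hu]
  norm_num

lemma householder_mul_householder_mem_orthogonalGroup [StarRing K] [TrivialStar K]
    (hu : u ⬝ᵥ u ≠ 0) (hv : v ⬝ᵥ v ≠ 0) :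
    householder u * householder v ∈ orthogonalGroup n K := by
  rw [mem_orthogonalGroup_iff', transpose_mul, transpose_householder, transpose_householder,
    Matrix.mul_assoc, ← Matrix.mul_assoc (householder u), householder_mul_self hu, Matrix.one_mul,
    householder_mul_self hv]

lemma det_one_add_householder_mul_householder_ne_zero [NeZero (2 : K)] (hu : u ⬝ᵥ u ≠ 0)
    (hv : v ⬝ᵥ v ≠ 0) (huv : u ⬝ᵥ v ≠ 0) : (1 + householder u * householder v).det ≠ 0 := by
  intro singular
  obtain ⟨x, x_ne_zero, hx⟩ := exists_mulVec_eq_zero_iff.mpr singular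
  -- The two reflections send `x` to opposite vectors.
  have opposite : householder u *ᵥ x + householder v *ᵥ x = 0 := by
    rw [← add_mulVec, ← mulVec_zero (householder u), ← hx, mulVec_mulVec, mul_add, mul_one,
      ← Matrix.mul_assoc, householder_mul_self hu, Matrix.one_mul]
  rw [householder_mulVec, householder_mulVec] at opposite
  have two_ne_zero := NeZero.ne (2 : K)
  have v_orthogonal : v ⬝ᵥ x = 0 := by
    have := congrArg (u ⬝ᵥ ·) opposite
    simp only [dotProduct_add, dotProduct_sub, dotProduct_smul, smul_eq_mul,
      dotProduct_zero] at this
    field_simp at this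
    have : (2 * (v ⬝ᵥ x)) * (u ⬝ᵥ v) = 0 := by linear_combination -this
    simpa [two_ne_zero, huv] using this
  have u_orthogonal : u ⬝ᵥ x = 0 := by
    have := congrArg (v ⬝ᵥ ·) opposite
    simp only [dotProduct_add, dotProduct_sub, dotProduct_smul, smul_eq_mul,
      dotProduct_zero, dotProduct_comm v u] at this
    field_simp at this
    have : (2 * (u ⬝ᵥ x)) * (u ⬝ᵥ v) = 0 := by linear_combination -this
    simpa [two_ne_zero, huv] using this
  apply x_ne_zero
  simpa [u_orthogonal, v_orthogonal, ← two_smul K, two_ne_zero] using opposite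

end Householder

section Generation

variable {n : Type*} [Fintype n] [DecidableEq n]

lemma reflection_ofLp (u x : EuclideanSpace ℝ n) :
    ((Submodule.span ℝ {u})ᗮ.reflection x).ofLp = householder u.ofLp *ᵥ x.ofLp := by
  have inner_eq (y : EuclideanSpace ℝ n) : inner ℝ u y = u.ofLp ⬝ᵥ y.ofLp := by
    simp [EuclideanSpace.inner_eq_star_dotProduct, dotProduct_comm]
  rw [householder_mulVec, Submodule.reflection_orthogonal_apply,
    Submodule.reflection_singleton_apply, RCLike.ofReal_real_eq_id, id_eq,
    ← real_inner_self_eq_norm_sq, inner_eq, inner_eq]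
  ext i
  simp
  ring

lemma prod_reflection_ofLp (l : List (EuclideanSpace ℝ n)) (x : EuclideanSpace ℝ n) :
    ((l.map fun u => (Submodule.span ℝ {u})ᗮ.reflection).prod x).ofLp =
      (l.map fun u => householder u.ofLp).prod *ᵥ x.ofLp := by
  induction l with
  | nil => simp
  | cons u l ih =>
    rw [List.map_cons, List.prod_cons, List.map_cons, List.prod_cons, ← mulVec_mulVec, ← ih,
      ← reflection_ofLp]
    rfl

lemma norm_toEuclideanLin_of_mem_orthogonalGroup {U : Matrix n n ℝ}
    (hU : U ∈ orthogonalGroup n ℝ) (x : EuclideanSpace ℝ n) : ‖toEuclideanLin U x‖ = ‖x‖ := by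
  have : (U *ᵥ x.ofLp) ⬝ᵥ (U *ᵥ x.ofLp) = x.ofLp ⬝ᵥ x.ofLp := by
    rw [dotProduct_mulVec, ← mulVec_transpose, mulVec_mulVec, (mem_orthogonalGroup_iff' n ℝ).mp hU,
      one_mulVec]
  rw [EuclideanSpace.norm_eq, EuclideanSpace.norm_eq]
  simpa [dotProduct, sq] using congrArg Real.sqrt this

lemma exists_eq_prod_householder {U : Matrix n n ℝ} (hU : U ∈ orthogonalGroup n ℝ) :
    ∃ l : List (n → ℝ), U = (l.map householder).prod := by
  let isometry : EuclideanSpace ℝ n ≃ₗᵢ[ℝ] EuclideanSpace ℝ n :=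
    LinearIsometry.toLinearIsometryEquiv
      ⟨toEuclideanLin U, norm_toEuclideanLin_of_mem_orthogonalGroup hU⟩ rfl
  obtain ⟨l, -, eq_prod⟩ := isometry.reflections_generate_dim
  refine ⟨l.map WithLp.ofLp, ext_of_mulVec_single fun i => ?_⟩
  have := prod_reflection_ofLp l (EuclideanSpace.single i 1)
  rw [← eq_prod] at this
  rw [List.map_map]
  exact this

theorem specialOrthogonalGroup_le_of_householder_mul_householder_mem {S : Submonoid (Matrix n n ℝ)}
    (hS : ∀ u v : n → ℝ, u ≠ 0 → v ≠ 0 → householder u * householder v ∈ S) :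
    specialOrthogonalGroup n ℝ ≤ S := by
  have parity (l : List (n → ℝ)) :
      ((l.map householder).prod.det = 1 ∧ (l.map householder).prod ∈ S) ∨
      ((l.map householder).prod.det = -1 ∧
        ∀ v : n → ℝ, v ≠ 0 → householder v * (l.map householder).prod ∈ S) := by
    induction l with
    | nil => simp
    | cons u l ih =>
      rw [List.map_cons, List.prod_cons, det_mul]
      obtain rfl | hu := eq_or_ne u 0
      · rwa [householder_zero, det_one, one_mul, Matrix.one_mul]
      rw [det_householder (dotProduct_self_eq_zero.not.mpr hu)]
      obtain ⟨det_eq, mem⟩ | ⟨det_eq, mem⟩ := ih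
      · refine .inr ⟨by rw [det_eq, mul_one], fun v hv => ?_⟩
        rw [← Matrix.mul_assoc]
        exact S.mul_mem (hS v u hv hu) mem
      · exact .inl ⟨by rw [det_eq, neg_one_mul, neg_neg], mem u hu⟩
  intro U hU
  obtain ⟨orthogonal, det_eq⟩ := mem_specialOrthogonalGroup_iff.mp hU
  obtain ⟨l, rfl⟩ := exists_eq_prod_householder orthogonal
  obtain ⟨-, mem⟩ | ⟨det_eq', -⟩ := parity l
  · exact mem
  · rw [det_eq] at det_eq'
    norm_num at det_eq'

end Generation

section Uniqueness

/-- The submonoid of elements whose right translation preserves `μ`. -/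
def rightStabilizer {G : Type*} [Monoid G] [MeasurableSpace G] [MeasurableMul G] (μ : Measure G) :
    Submonoid G where
  carrier := {g | μ.map (· * g) = μ}
  one_mem' := by simp
  mul_mem' {g h} hg hh := by
    rw [Set.mem_ofPred_eq] at hg hh ⊢
    nth_rewrite 2 [← hh]
    nth_rewrite 2 [← hg]
    rw [Measure.map_map (measurable_mul_const h) (measurable_mul_const g)]
    simp only [Function.comp_def, mul_assoc]

theorem measure_eq_smul_of_invariant {G : Type*} [Mul G] [MeasurableSpace G] [MeasurableMul₂ G]
    {μ ν : Measure G} [SFinite μ] [IsProbabilityMeasure ν]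
    (hν : ∀ᵐ x ∂μ, ν.map (x * ·) = ν) (hμ : ∀ᵐ y ∂ν, μ.map (· * y) = μ) :
    μ = μ Set.univ • ν := by
  refine Measure.ext_of_lintegral _ fun f hf => ?_
  calc ∫⁻ x, f x ∂μ
    _ = ∫⁻ _, ∫⁻ x, f x ∂μ ∂ν := by rw [lintegral_const, measure_univ, mul_one]
    _ = ∫⁻ y, ∫⁻ x, f (x * y) ∂μ ∂ν := by
        refine lintegral_congr_ae (hμ.mono fun y hy => ?_)
        beta_reduce
        rw [← lintegral_map hf (measurable_mul_const y), hy]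
    _ = ∫⁻ x, ∫⁻ y, f (x * y) ∂ν ∂μ :=
        lintegral_lintegral_swap (hf.comp (measurable_snd.mul measurable_fst)).aemeasurable
    _ = ∫⁻ _, ∫⁻ y, f y ∂ν ∂μ := by
        refine lintegral_congr_ae (hν.mono fun x hx => ?_)
        beta_reduce
        rw [← lintegral_map hf (measurable_const_mul x), hx]
    _ = ∫⁻ x, f x ∂(μ Set.univ • ν) := by
        rw [lintegral_const, lintegral_smul_measure, smul_eq_mul, mul_comm]

lemma ne_top_of_sigmaFinite_smul {α : Type*} [MeasurableSpace α] (μ : Measure α) [NeZero μ]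
    (c : ENNReal) [SigmaFinite (c • μ)] : c ≠ ⊤ := by
  rintro rfl
  have univ_pos : 0 < ((⊤ : ENNReal) • μ) Set.univ := by
    simp [NeZero.ne μ]
  obtain ⟨t, -, -, pos, finite⟩ :=
    Measure.exists_subset_measure_lt_top MeasurableSet.univ univ_pos
  rw [Measure.smul_apply, smul_eq_mul] at pos finite
  exact finite.ne (ENNReal.top_mul (right_ne_zero_of_mul pos.ne'))

variable {n : Type*} [Fintype n] [DecidableEq n]

lemma specialOrthogonalGroup_le_rightStabilizer_cayleyMeasure :
    specialOrthogonalGroup n ℝ ≤ rightStabilizer (cayleyMeasure n) := by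
  have self_ne_zero {u : n → ℝ} (hu : u ≠ 0) : u ⬝ᵥ u ≠ 0 := dotProduct_self_eq_zero.not.mpr hu
  have mem_of_dotProduct_ne_zero {u v : n → ℝ} (hu : u ≠ 0) (hv : v ≠ 0) (huv : u ⬝ᵥ v ≠ 0) :
      householder u * householder v ∈ rightStabilizer (cayleyMeasure n) :=
    map_mul_right_cayleyMeasure
      (householder_mul_householder_mem_orthogonalGroup (self_ne_zero hu) (self_ne_zero hv))
      (det_one_add_householder_mul_householder_ne_zero (self_ne_zero hu) (self_ne_zero hv) huv)
  refine specialOrthogonalGroup_le_of_householder_mul_householder_mem fun u v hu hv => ?_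
  obtain huv | huv := ne_or_eq (u ⬝ᵥ v) 0
  · exact mem_of_dotProduct_ne_zero hu hv huv
  have left : u ⬝ᵥ (u + v) ≠ 0 := by rw [dotProduct_add, huv, add_zero]; exact self_ne_zero hu
  have right : (u + v) ⬝ᵥ v ≠ 0 := by rw [add_dotProduct, huv, zero_add]; exact self_ne_zero hv
  have sum_ne_zero : u + v ≠ 0 := fun h => left (by rw [h, dotProduct_zero])
  have := mul_mem (mem_of_dotProduct_ne_zero hu sum_ne_zero left)
    (mem_of_dotProduct_ne_zero sum_ne_zero hv right)
  rwa [Matrix.mul_assoc, ← Matrix.mul_assoc (householder (u + v)),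
    householder_mul_self (self_ne_zero sum_ne_zero), Matrix.one_mul] at this

variable {ν : Measure (Matrix n n ℝ)}

theorem exists_eq_smul_cayleyMeasure (hν : IsHaarSO n ν) :
    ∃ κ : ENNReal, ν = κ • cayleyMeasure n := by
  obtain ⟨probability, ae_special, invariant⟩ := hν
  have proportional : cayleyMeasure n = cayleyMeasure n Set.univ • ν := by
    refine measure_eq_smul_of_invariant ?_ ?_
    · filter_upwards [ae_mem_cayleyMeasure] with U hU
      obtain ⟨orthogonal, det_eq⟩ := mem_specialOrthogonalGroup_iff.mp hU
      exact invariant U ((mem_orthogonalGroup_iff' n ℝ).mp orthogonal) det_eq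
    · filter_upwards [ae_special] with U hU
      exact specialOrthogonalGroup_le_rightStabilizer_cayleyMeasure
        (mem_specialOrthogonalGroup_iff.mpr ⟨(mem_orthogonalGroup_iff' n ℝ).mpr hU.1, hU.2⟩)
  have finite : cayleyMeasure n Set.univ ≠ ⊤ := by
    have : SigmaFinite (cayleyMeasure n Set.univ • ν) := proportional ▸ inferInstance
    exact ne_top_of_sigmaFinite_smul ν _
  have nonzero : cayleyMeasure n Set.univ ≠ 0 :=
    Measure.measure_univ_ne_zero.mpr cayleyMeasure_ne_zero
  refine ⟨(cayleyMeasure n Set.univ)⁻¹, ?_⟩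
  nth_rewrite 2 [proportional]
  rw [smul_smul, ENNReal.inv_mul_cancel nonzero finite, one_smul]

end Uniqueness

section ChangeOfVariables

lemma lintegral_eq_abs_det_mul_lintegral_comp {E : Type*} [NormedAddCommGroup E] [NormedSpace ℝ E]
    [FiniteDimensional ℝ E] [MeasurableSpace E] [BorelSpace E] (μ : Measure E)
    [μ.IsAddHaarMeasure] {L : E →ₗ[ℝ] E} (hL : L.det ≠ 0) (f : E → ENNReal) :
    ∫⁻ x, f x ∂μ = ENNReal.ofReal |L.det| * ∫⁻ x, f (L x) ∂μ := by
  have bijective : Function.Bijective L := (LinearMap.equivOfDetNeZero L hL).bijective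
  have image_formula := lintegral_image_eq_lintegral_abs_det_fderiv_mul μ MeasurableSet.univ
    (fun _ _ => L.toContinuousLinearMap.hasFDerivAt.hasFDerivWithinAt)
    bijective.injective.injOn f
  rw [LinearMap.coe_toContinuousLinearMap', Set.image_univ, bijective.surjective.range_eq,
    Measure.restrict_univ, LinearMap.det_toContinuousLinearMap] at image_formula
  rw [image_formula, lintegral_const_mul' _ _ ENNReal.ofReal_ne_top]

variable {m n : Type*} [Fintype m] [DecidableEq m] [Fintype n]

lemma det_mulLeftLinearMap {R : Type*} [CommRing R] (A : Matrix m m R) :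
    (mulLeftLinearMap n R A).det = A.det ^ Fintype.card n := by
  classical
  let columnwise : (n → m → R) →ₗ[R] (n → m → R) :=
    LinearMap.pi fun j => (toLin' A).comp (LinearMap.proj j)
  let e : (n → m → R) ≃ₗ[R] Matrix m n R := transposeLinearEquiv n m R R
  have conj : mulLeftLinearMap n R A = e ∘ₗ columnwise ∘ₗ e.symm := rfl
  rw [conj, LinearMap.det_conj, LinearMap.det_pi]
  simp

lemma lintegral_matrix_eq_lintegral_mul_left {A : Matrix m m ℝ} (hA : A.det ≠ 0)
    (f : Matrix m n ℝ → ENNReal) :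
    ∫⁻ Y, f Y = ENNReal.ofReal (|A.det| ^ Fintype.card n) * ∫⁻ W : Matrix m n ℝ, f (A * W) := by
  have det_eq : LinearMap.det (M := m → n → ℝ) (mulLeftLinearMap n ℝ A) = _ :=
    det_mulLeftLinearMap A
  rw [← abs_pow, ← det_eq]
  exact lintegral_eq_abs_det_mul_lintegral_comp (E := m → n → ℝ) volume
    (det_eq.trans_ne (pow_ne_zero _ hA)) f

end ChangeOfVariables

section SkewBlock

variable {m n R : Type*}

/-- The block matrix `[[X, Y], [-Yᵀ, Z]]`, which is skew-symmetric when `X` and `Z` are. -/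
def skewBlock [Neg R] (X : Matrix m m R) (Y : Matrix m n R) (Z : Matrix n n R) :
    Matrix (m ⊕ n) (m ⊕ n) R :=
  fromBlocks X Y (-Yᵀ) Z

section CommRing

variable [CommRing R] {X : Matrix m m R} {Z : Matrix n n R}

lemma transpose_skewBlock (hX : Xᵀ = -X) (Y : Matrix m n R) (hZ : Zᵀ = -Z) :
    (skewBlock X Y Z)ᵀ = -skewBlock X Y Z := by
  rw [skewBlock, fromBlocks_transpose, fromBlocks_neg, hX, hZ, transpose_neg, transpose_transpose,
    neg_neg]

lemma skewBlock_toBlocks {A : Matrix (m ⊕ n) (m ⊕ n) R} (hA : Aᵀ = -A) :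
    skewBlock A.toBlocks₁₁ A.toBlocks₁₂ A.toBlocks₂₂ = A := by
  have lower_left : -A.toBlocks₁₂ᵀ = A.toBlocks₂₁ := by
    rw [neg_eq_iff_eq_neg]
    ext i j
    exact congrFun₂ hA (.inr i) (.inl j)
  rw [skewBlock, lower_left, fromBlocks_toBlocks]

variable [Fintype m] [DecidableEq m] [Fintype n] [DecidableEq n]

lemma det_one_add_skewBlock (hX : Xᵀ = -X) (h : IsUnit (1 + X).det) (W : Matrix m n R)
    (Z : Matrix n n R) :
    (1 + skewBlock X (-((1 + X) * W)) Z).det =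
      (1 + X).det * (1 + Wᵀ * W + (Z - Wᵀ * X * W)).det := by
  let : Invertible (1 + X) := invertibleOfIsUnitDet _ h
  rw [skewBlock, ← fromBlocks_one, fromBlocks_add, zero_add, zero_add, det_fromBlocks₁₁]
  congr 2
  rw [Matrix.mul_assoc, Matrix.mul_neg, Matrix.invOf_mul_cancel_left, transpose_neg, transpose_mul,
    transpose_add, transpose_one, hX]
  simp only [Matrix.mul_add, Matrix.add_mul, Matrix.mul_neg, Matrix.neg_mul, Matrix.mul_one]
  abel

end CommRing

variable [Fintype m] [Fintype n]

/-- A skew-symmetric block matrix in terms of its blocks, in coordinates. -/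
def skewBlockEquiv : (SkewCoord m × Matrix m n ℝ × SkewCoord n) ≃ₗ[ℝ] SkewCoord (m ⊕ n) where
  toFun p := upperEntries (skewBlock (skewMatrix p.1) p.2.1 (skewMatrix p.2.2))
  invFun v := (upperEntries (skewMatrix v).toBlocks₁₁, (skewMatrix v).toBlocks₁₂,
    upperEntries (skewMatrix v).toBlocks₂₂)
  map_add' p q := by
    rw [← map_add]
    congr 1
    ext (i | i) (j | j) <;> simp [skewBlock, add_comm]
  map_smul' c p := by
    rw [← map_smul]
    congr 1
    ext (i | i) (j | j) <;> simp [skewBlock]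
  left_inv p := by
    beta_reduce
    rw [skewMatrix_upperEntries
      (transpose_skewBlock (transpose_skewMatrix _) _ (transpose_skewMatrix _)), skewBlock,
      toBlocks_fromBlocks₁₁, toBlocks_fromBlocks₁₂, toBlocks_fromBlocks₂₂, upperEntries_skewMatrix,
      upperEntries_skewMatrix]
  right_inv v := by
    have skew := transpose_skewMatrix v
    have skew₁₁ : (skewMatrix v).toBlocks₁₁ᵀ = -(skewMatrix v).toBlocks₁₁ :=
      congrArg toBlocks₁₁ skew
    have skew₂₂ : (skewMatrix v).toBlocks₂₂ᵀ = -(skewMatrix v).toBlocks₂₂ :=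
      congrArg toBlocks₂₂ skew
    beta_reduce
    rw [skewMatrix_upperEntries skew₁₁, skewMatrix_upperEntries skew₂₂, skewBlock_toBlocks skew,
      upperEntries_skewMatrix]

lemma skewMatrix_skewBlockEquiv (p : SkewCoord m × Matrix m n ℝ × SkewCoord n) :
    skewMatrix (skewBlockEquiv p) = skewBlock (skewMatrix p.1) p.2.1 (skewMatrix p.2.2) :=
  skewMatrix_upperEntries
    (transpose_skewBlock (transpose_skewMatrix _) _ (transpose_skewMatrix _))

lemma continuous_skewBlockEquiv :
    Continuous (skewBlockEquiv : SkewCoord m × Matrix m n ℝ × SkewCoord n → SkewCoord (m ⊕ n)) :=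
  LinearMap.continuous_of_finiteDimensional skewBlockEquiv.toLinearMap

lemma exists_lintegral_skewCoord_sum (m n : Type*) [Fintype m] [Fintype n] :
    ∃ c : ENNReal, ∀ F : SkewCoord (m ⊕ n) → ENNReal, Measurable F →
      ∫⁻ v, F v = c * ∫⁻ x : SkewCoord m, ∫⁻ Y : Matrix m n ℝ, ∫⁻ z : SkewCoord n,
        F (skewBlockEquiv (x, Y, z)) := by
  let e : (SkewCoord m × Matrix m n ℝ × SkewCoord n) ≃L[ℝ] SkewCoord (m ⊕ n) :=
    skewBlockEquiv.toContinuousLinearEquiv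
  let μ : Measure (SkewCoord m × Matrix m n ℝ × SkewCoord n) :=
    volume.prod (volume.prod volume)
  have : ((volume : Measure (Matrix m n ℝ)).prod
      (volume : Measure (SkewCoord n))).IsAddHaarMeasure :=
    Measure.prod.instIsAddHaarMeasure volume volume
  have : μ.IsAddHaarMeasure := Measure.prod.instIsAddHaarMeasure volume _
  have := e.isAddHaarMeasure_map μ
  obtain ⟨c, proportional⟩ : ∃ c : NNReal, volume = c • μ.map e :=
    ⟨_, Measure.isAddLeftInvariant_eq_smul volume (μ.map e)⟩
  refine ⟨c, fun F hF => ?_⟩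
  have hFe : Measurable fun p => F (e p) := hF.comp e.continuous.measurable
  rw [proportional, lintegral_smul_measure, lintegral_map hF e.continuous.measurable,
    ENNReal.smul_def, smul_eq_mul, lintegral_prod _ hFe.aemeasurable]
  congr 1
  exact lintegral_congr fun x => lintegral_prod _ (hFe.comp measurable_prodMk_left).aemeasurable

end SkewBlock

section CornerBlock

variable {m n R : Type*} [Fintype n] [DecidableEq n] [CommRing R]

/-- The matrix `B(1 + D)⁻¹` attached to a block matrix `[[A, B], [C, D]]`. -/
def cornerBlock (O : Matrix (m ⊕ n) (m ⊕ n) R) : Matrix m n R :=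
  O.toBlocks₁₂ * (1 + O.toBlocks₂₂)⁻¹

lemma measurable_cornerBlock [Countable m] :
    Measurable (cornerBlock : Matrix (m ⊕ n) (m ⊕ n) ℝ → Matrix m n ℝ) := by
  have upper_right : Continuous fun O : Matrix (m ⊕ n) (m ⊕ n) ℝ => O.toBlocks₁₂ :=
    continuous_id.matrix_submatrix Sum.inl Sum.inr
  have lower_right : Continuous fun O : Matrix (m ⊕ n) (m ⊕ n) ℝ => O.toBlocks₂₂ :=
    continuous_id.matrix_submatrix Sum.inr Sum.inr
  exact measurable_matrix_mul upper_right.measurable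
    (measurable_matrix_inv.comp (lower_right.measurable.const_add 1))

variable [Fintype m] [DecidableEq m]

lemma toBlocks₁₂_mul_inv_toBlocks₂₂ {K L : Matrix (m ⊕ n) (m ⊕ n) R} {c : R} (hc : IsUnit c)
    (hKL : K * L = c • 1) (hK : IsUnit K.toBlocks₁₁.det) :
    L.toBlocks₁₂ * L.toBlocks₂₂⁻¹ = -(K.toBlocks₁₁⁻¹ * K.toBlocks₁₂) := by
  rw [← fromBlocks_toBlocks K, ← fromBlocks_toBlocks L, fromBlocks_multiply, ← fromBlocks_one,
    fromBlocks_smul, fromBlocks_inj] at hKL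
  obtain ⟨-, upper_right, -, lower_right⟩ := hKL
  have factor : L.toBlocks₁₂ = -(K.toBlocks₁₁⁻¹ * K.toBlocks₁₂) * L.toBlocks₂₂ := by
    rw [smul_zero, add_eq_zero_iff_eq_neg] at upper_right
    rw [Matrix.neg_mul, Matrix.mul_assoc, ← Matrix.mul_neg, ← upper_right,
      nonsing_inv_mul_cancel_left _ _ hK]
  have det_isUnit : IsUnit L.toBlocks₂₂.det := by
    rw [factor, ← Matrix.mul_assoc, ← Matrix.add_mul] at lower_right
    have det_eq := congrArg det lower_right
    rw [det_mul, det_smul, det_one, mul_one] at det_eq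
    exact isUnit_of_mul_isUnit_right (det_eq ▸ hc.pow _)
  rw [factor, mul_nonsing_inv_cancel_right _ _ det_isUnit]

lemma cornerBlock_cayley {A : Matrix (m ⊕ n) (m ⊕ n) R} (h2 : IsUnit (2 : R))
    (hA : IsUnit (1 + A).det) (hA₁₁ : IsUnit (1 + A.toBlocks₁₁).det) :
    cornerBlock (cayley A) = -((1 + A.toBlocks₁₁)⁻¹ * A.toBlocks₁₂) := by
  have product : (1 + A) * (1 + cayley A) = (2 : R) • 1 := by
    rw [one_add_cayley, Matrix.mul_smul, mul_nonsing_inv _ hA]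
  have one_add (B : Matrix (m ⊕ n) (m ⊕ n) R) : 1 + B =
      fromBlocks (1 + B.toBlocks₁₁) B.toBlocks₁₂ B.toBlocks₂₁ (1 + B.toBlocks₂₂) := by
    conv_lhs => rw [← fromBlocks_toBlocks B, ← fromBlocks_one, fromBlocks_add, zero_add, zero_add]
  rw [one_add A, one_add (cayley A)] at product
  have := toBlocks₁₂_mul_inv_toBlocks₂₂ h2 product (by rwa [toBlocks_fromBlocks₁₁])
  rwa [toBlocks_fromBlocks₁₁, toBlocks_fromBlocks₁₂, toBlocks_fromBlocks₁₂,
    toBlocks_fromBlocks₂₂] at this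

lemma cornerBlock_cayley_skewBlock {𝕜 : Type*} [Field 𝕜] [LinearOrder 𝕜] [IsStrictOrderedRing 𝕜]
    {X : Matrix m m 𝕜} {Z : Matrix n n 𝕜} (hX : Xᵀ = -X) (hZ : Zᵀ = -Z) (W : Matrix m n 𝕜) :
    cornerBlock (cayley (skewBlock X (-((1 + X) * W)) Z)) = W := by
  have hX_unit := (det_one_add_ne_zero_of_skew hX).isUnit
  have h_unit := (det_one_add_ne_zero_of_skew
    (transpose_skewBlock hX (-((1 + X) * W)) hZ)).isUnit
  rw [cornerBlock_cayley two_ne_zero.isUnit h_unit hX_unit, skewBlock, toBlocks_fromBlocks₁₁,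
    toBlocks_fromBlocks₁₂, Matrix.mul_neg, neg_neg, nonsing_inv_mul_cancel_left _ _ hX_unit]

end CornerBlock

section CornerDensity

variable {m n : Type*} [Fintype m] [DecidableEq n]

lemma posDef_one_add_transpose_mul_self [Finite n] (W : Matrix m n ℝ) : (1 + Wᵀ * W).PosDef :=
  PosDef.one.add_posSemidef
    (conjTranspose_eq_transpose_of_trivial W ▸ posSemidef_conjTranspose_mul_self W)

variable [Fintype n]

lemma lintegral_inv_abs_det_add_skewMatrix {S : Matrix n n ℝ} (hS : S.PosDef) (k : ℕ) :
    ∫⁻ z, ENNReal.ofReal (|(S + skewMatrix z).det| ^ k)⁻¹ =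
      ENNReal.ofReal (S.det ^ (((Fintype.card n - 1 : ℕ) : ℝ) / 2 - k)) *
        ∫⁻ z : SkewCoord n, ENNReal.ofReal (|(1 + skewMatrix z).det| ^ k)⁻¹ := by
  obtain ⟨Q, rfl⟩ : ∃ Q : Matrix n n ℝ, S = Qᵀ * Q := by
    open scoped MatrixOrder in
    obtain ⟨Q, hQ⟩ := CStarAlgebra.nonneg_iff_eq_star_mul_self.mp hS.posSemidef.nonneg
    exact ⟨Q, by rw [hQ, star_eq_conjTranspose, conjTranspose_eq_transpose_of_trivial]⟩
  have det_S : (Qᵀ * Q).det = |Q.det| ^ 2 := by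
    rw [det_mul, det_transpose, sq_abs, sq]
  have det_Q_pos : 0 < |Q.det| := abs_pos.mpr fun h =>
    hS.det_pos.ne' (by rw [det_S, h, abs_zero, zero_pow two_ne_zero])
  have det_congr (z : SkewCoord n) : (Qᵀ * Q + skewMatrix (skewCongr Q z)).det =
      |Q.det| ^ 2 * (1 + skewMatrix z).det := by
    rw [skewMatrix_skewCongr, ← det_S, det_mul, mul_right_comm, ← det_mul, ← det_mul,
      Matrix.mul_add, Matrix.add_mul, Matrix.mul_one]
  have det_skewCongr_ne_zero : (skewCongr Q).det ≠ 0 := by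
    rw [det_skewCongr]
    exact pow_ne_zero _ (abs_pos.mp det_Q_pos)
  have jacobian : |Q.det| ^ (Fintype.card n - 1) * ((|Q.det| ^ 2) ^ k)⁻¹ =
      (|Q.det| ^ 2) ^ (((Fintype.card n - 1 : ℕ) : ℝ) / 2 - k) := by
    rw [Real.rpow_sub_natCast (by positivity), ← Real.rpow_natCast_mul det_Q_pos.le, div_eq_mul_inv,
      Nat.cast_ofNat, mul_div_cancel₀ _ two_ne_zero, Real.rpow_natCast]
  rw [lintegral_eq_abs_det_mul_lintegral_comp volume det_skewCongr_ne_zero, det_skewCongr, abs_pow]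
  simp only [det_congr, abs_mul, abs_pow, abs_abs, mul_pow, mul_inv]
  simp only [ENNReal.ofReal_mul (inv_nonneg.mpr (pow_nonneg (pow_nonneg det_Q_pos.le 2) k))]
  rw [lintegral_const_mul' _ _ ENNReal.ofReal_ne_top, ← mul_assoc,
    ← ENNReal.ofReal_mul (by positivity), jacobian, det_S]

/-- The unnormalised density `det(1 + WᵀW) ^ (1/2 - M - N/2)` of the corner block of a random
rotation, for `W` of size `M × N`. -/
def cornerDensity (W : Matrix m n ℝ) : ℝ :=
  (1 + Wᵀ * W).det ^ ((1 : ℝ) / 2 - Fintype.card m - (Fintype.card n : ℝ) / 2)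

lemma measurable_cornerDensity : Measurable (cornerDensity : Matrix m n ℝ → ℝ) := by
  have : Continuous fun W : Matrix m n ℝ => (1 + Wᵀ * W).det :=
    (continuous_const.add (continuous_id.matrix_transpose.matrix_mul continuous_id)).matrix_det
  exact this.measurable.pow_const _

lemma cornerDensity_eq_rpow (W : Matrix m n ℝ) :
    cornerDensity W = (1 + Wᵀ * W).det ^
      (((Fintype.card n - 1 : ℕ) : ℝ) / 2 - (Fintype.card (m ⊕ n) - 1 : ℕ)) := by
  rw [cornerDensity]
  rcases isEmpty_or_nonempty n with h | h
  · simp only [det_isEmpty, Real.one_rpow]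
  · congr 1
    rw [Fintype.card_sum, Nat.add_sub_assoc Fintype.card_pos]
    push_cast [Nat.cast_sub (Fintype.card_pos (α := n))]
    ring

variable [DecidableEq m]

lemma lintegral_cayleyDensity_skewBlockEquiv (x : SkewCoord m) (W : Matrix m n ℝ) :
    ∫⁻ z, cayleyDensity (skewBlockEquiv (x, -((1 + skewMatrix x) * W), z)) =
      ENNReal.ofReal (|(1 + skewMatrix x).det| ^ (Fintype.card (m ⊕ n) - 1))⁻¹ *
        ENNReal.ofReal (cornerDensity W) * ∫⁻ z : SkewCoord n,
          ENNReal.ofReal (|(1 + skewMatrix z).det| ^ (Fintype.card (m ⊕ n) - 1))⁻¹ := by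
  set k := Fintype.card (m ⊕ n) - 1 with hk
  let shift : SkewCoord n := upperEntries (Wᵀ * skewMatrix x * W)
  have skewMatrix_shift : skewMatrix shift = Wᵀ * skewMatrix x * W :=
    skewMatrix_upperEntries (by simp [transpose_mul, transpose_skewMatrix, Matrix.mul_assoc])
  let f (z : SkewCoord n) : ENNReal := ENNReal.ofReal (|(1 + Wᵀ * W + skewMatrix z).det| ^ k)⁻¹
  have density_eq (z : SkewCoord n) :
      cayleyDensity (skewBlockEquiv (x, -((1 + skewMatrix x) * W), z)) =
        ENNReal.ofReal (|(1 + skewMatrix x).det| ^ k)⁻¹ * f (z - shift) := by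
    dsimp only [f]
    rw [cayleyDensity, skewMatrix_skewBlockEquiv, det_one_add_skewBlock (transpose_skewMatrix x)
      (det_one_add_skewMatrix_ne_zero x).isUnit, ← hk, ← skewMatrix_shift, ← map_sub, abs_mul,
      mul_pow, mul_inv, ENNReal.ofReal_mul (by positivity)]
  simp only [density_eq]
  rw [lintegral_const_mul' _ _ ENNReal.ofReal_ne_top, lintegral_sub_right_eq_self f,
    lintegral_inv_abs_det_add_skewMatrix (posDef_one_add_transpose_mul_self W),
    cornerDensity_eq_rpow, mul_assoc]

end CornerDensity

section CornerLaw

variable {m n : Type*} [Fintype m] [DecidableEq m] [Fintype n] [DecidableEq n]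

lemma lintegral_cayleyDensity_mul_cornerBlock (x : SkewCoord m) {g : Matrix m n ℝ → ENNReal}
    (hg : Measurable g) :
    ∫⁻ Y, ∫⁻ z, cayleyDensity (skewBlockEquiv (x, Y, z)) *
        g (cornerBlock (skewCayley (skewBlockEquiv (x, Y, z)))) =
      ENNReal.ofReal (|(1 + skewMatrix x).det| ^ Fintype.card n) *
        (ENNReal.ofReal (|(1 + skewMatrix x).det| ^ (Fintype.card (m ⊕ n) - 1))⁻¹ *
          ∫⁻ z : SkewCoord n,
            ENNReal.ofReal (|(1 + skewMatrix z).det| ^ (Fintype.card (m ⊕ n) - 1))⁻¹) *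
        ∫⁻ W, ENNReal.ofReal (cornerDensity W) * g W := by
  have abs_det_neg : |(-(1 + skewMatrix x)).det| = |(1 + skewMatrix x).det| := by
    rw [det_neg, abs_mul, abs_pow, abs_neg, abs_one, one_pow, one_mul]
  have det_neg_ne_zero : (-(1 + skewMatrix x)).det ≠ 0 := by
    rw [← abs_pos, abs_det_neg, abs_pos]
    exact det_one_add_skewMatrix_ne_zero x
  have corner_eq (W : Matrix m n ℝ) (z : SkewCoord n) :
      cornerBlock (skewCayley (skewBlockEquiv (x, -((1 + skewMatrix x) * W), z))) = W := by
    rw [skewCayley, skewMatrix_skewBlockEquiv,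
      cornerBlock_cayley_skewBlock (transpose_skewMatrix x) (transpose_skewMatrix z)]
  have measurable_density (W : Matrix m n ℝ) : Measurable fun z =>
      cayleyDensity (skewBlockEquiv (x, -((1 + skewMatrix x) * W), z)) :=
    measurable_cayleyDensity.comp
      (continuous_skewBlockEquiv.measurable.comp
        (measurable_const.prodMk (measurable_const.prodMk measurable_id)))
  rw [lintegral_matrix_eq_lintegral_mul_left det_neg_ne_zero, abs_det_neg]
  simp only [Matrix.neg_mul, corner_eq]
  rw [mul_assoc]
  congr 1
  have measurable_integrand : Measurable fun W => ENNReal.ofReal (cornerDensity W) * g W :=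
    measurable_cornerDensity.ennreal_ofReal.mul hg
  rw [← lintegral_const_mul _ measurable_integrand]
  refine lintegral_congr fun W => ?_
  rw [lintegral_mul_const _ (measurable_density W), lintegral_cayleyDensity_skewBlockEquiv]
  ring

theorem exists_map_cornerBlock_cayleyMeasure (m n : Type*) [Fintype m] [DecidableEq m] [Fintype n]
    [DecidableEq n] :
    ∃ K : ENNReal, (cayleyMeasure (m ⊕ n)).map cornerBlock =
      K • (volume : Measure (Matrix m n ℝ)).withDensity
        fun W => ENNReal.ofReal (cornerDensity W) := by
  obtain ⟨c, fubini⟩ := exists_lintegral_skewCoord_sum m n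
  let k := Fintype.card (m ⊕ n) - 1
  let q (x : SkewCoord m) : ENNReal := ENNReal.ofReal (|(1 + skewMatrix x).det| ^ Fintype.card n) *
    (ENNReal.ofReal (|(1 + skewMatrix x).det| ^ k)⁻¹ *
      ∫⁻ z : SkewCoord n, ENNReal.ofReal (|(1 + skewMatrix z).det| ^ k)⁻¹)
  have measurable_q : Measurable q := by
    have : Measurable fun x : SkewCoord m => |(1 + skewMatrix x).det| :=
      (continuous_const.add continuous_skewMatrix).matrix_det.abs.measurable
    exact (this.pow_const _).ennreal_ofReal.mul ((this.pow_const _).inv.ennreal_ofReal.mul_const _)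
  refine ⟨c * ∫⁻ x, q x, Measure.ext_of_lintegral _ fun g hg => ?_⟩
  have hg_corner : Measurable fun O : Matrix (m ⊕ n) (m ⊕ n) ℝ => g (cornerBlock O) :=
    hg.comp measurable_cornerBlock
  calc ∫⁻ W, g W ∂(cayleyMeasure (m ⊕ n)).map cornerBlock
    _ = ∫⁻ v, cayleyDensity v * g (cornerBlock (skewCayley v)) := by
        rw [lintegral_map hg measurable_cornerBlock, lintegral_cayleyMeasure hg_corner]
    _ = c * ∫⁻ x, q x * ∫⁻ W, ENNReal.ofReal (cornerDensity W) * g W := by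
        have measurable_integrand : Measurable fun v =>
            cayleyDensity v * g (cornerBlock (skewCayley v)) :=
          measurable_cayleyDensity.mul (hg_corner.comp measurable_skewCayley)
        rw [fubini _ measurable_integrand]
        simp only [q, k, lintegral_cayleyDensity_mul_cornerBlock _ hg]
    _ = _ := by
        rw [lintegral_mul_const _ measurable_q, lintegral_smul_measure,
          lintegral_withDensity_eq_lintegral_mul _ measurable_cornerDensity.ennreal_ofReal hg,
          smul_eq_mul, mul_assoc]
        rfl

lemma exists_eq_withDensity_of_eq_smul {α : Type*} [MeasurableSpace α] {μ π : Measure α}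
    [IsProbabilityMeasure π] {f : α → ℝ} {K : ENNReal}
    (h : π = K • μ.withDensity fun x => ENNReal.ofReal (f x)) :
    ∃ c : ℝ, 0 < c ∧ π = μ.withDensity fun x => ENNReal.ofReal (c * f x) := by
  set unnormalised := μ.withDensity fun x => ENNReal.ofReal (f x)
  have K_ne_zero : K ≠ 0 := by
    rintro rfl
    exact IsProbabilityMeasure.ne_zero π (by rw [h, zero_smul])
  have : NeZero unnormalised :=
    ⟨fun zero => IsProbabilityMeasure.ne_zero π (by rw [h, zero, smul_zero])⟩
  have : SigmaFinite (K • unnormalised) := h ▸ inferInstance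
  have K_ne_top : K ≠ ⊤ := ne_top_of_sigmaFinite_smul unnormalised K
  refine ⟨K.toReal, ENNReal.toReal_pos K_ne_zero K_ne_top, ?_⟩
  simp only [ENNReal.ofReal_mul ENNReal.toReal_nonneg, ENNReal.ofReal_toReal K_ne_top]
  rw [h]
  exact (withDensity_smul' K _ K_ne_top).symm

theorem IsHaarSO.exists_map_cornerBlock_eq_withDensity {ν : Measure (Matrix (m ⊕ n) (m ⊕ n) ℝ)}
    (hν : IsHaarSO (m ⊕ n) ν) :
    ∃ c : ℝ, 0 < c ∧ ν.map cornerBlock = (volume : Measure (Matrix m n ℝ)).withDensity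
      fun W => ENNReal.ofReal (c * cornerDensity W) := by
  obtain ⟨κ, hκ⟩ := exists_eq_smul_cayleyMeasure hν
  obtain ⟨K, hK⟩ := exists_map_cornerBlock_cayleyMeasure m n
  have := hν.1
  have : IsProbabilityMeasure (ν.map (cornerBlock : _ → Matrix m n ℝ)) :=
    Measure.isProbabilityMeasure_map measurable_cornerBlock.aemeasurable
  refine exists_eq_withDensity_of_eq_smul (K := κ * K) ?_
  rw [hκ, Measure.map_smul, hK, smul_smul]

end CornerLaw

/-- Let `T̄ = M + N` and let `O = [[A, B], [C, D]]` be a uniformly random (Haar) `T̄×T̄`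
orthogonal matrix of determinant `1`, with `A` of size `M×M` and `D` of size `N×N`. Then the
law of `Ŵ = B(1+D)⁻¹` is absolutely continuous with respect to Lebesgue measure on `M×N` real
matrices, with density proportional to `det(1 + Ŵ*Ŵ)^(1/2 − M − N/2)`. -/
theorem corner_block_density (M N : ℕ) (hM : 0 < M) (hN : 0 < N)
    (Ω : Type*) [MeasurableSpace Ω] (P : Measure Ω) [IsProbabilityMeasure P]
    (O : Ω → Matrix (Fin M ⊕ Fin N) (Fin M ⊕ Fin N) ℝ) (hmeas : Measurable O)
    (hlaw : IsHaarSO (Fin M ⊕ Fin N) (P.map O)) :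
    ∃ c : ℝ, 0 < c ∧
      P.map (fun ω => (O ω).toBlocks₁₂ * (1 + (O ω).toBlocks₂₂)⁻¹) =
        volume.withDensity (fun W : Matrix (Fin M) (Fin N) ℝ =>
          ENNReal.ofReal
            (c * (1 + Wᵀ * W).det ^ ((1 : ℝ) / 2 - (M : ℝ) - (N : ℝ) / 2))) := by
  obtain ⟨c, hc, h⟩ := hlaw.exists_map_cornerBlock_eq_withDensity
  rw [Measure.map_map measurable_cornerBlock hmeas] at h
  simp only [cornerDensity, Fintype.card_fin] at h
  exact ⟨c, hc, h⟩

end
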